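/- (Effective stress of the relaxed dual-phase energy is the volume average of the phase stresses.) Let C_1, C_2 be stiffness tensors (self-adjoint linear maps on d×d matrices, mapping every A to the symmetric matrix C_i(Aˢʸᵐ), positive definite on nonzero symmetric matrices), ε_1^B, ε_2^B symmetric matrices, φ ∈ (0,1), n̂ ∈ ℝ^d a unit vector, and ψ_i(ε) = ½⟨ε − ε_i^B, C_i(ε − ε_i^B)⟩. Define the relaxed energy ψ^{rel}(ε) = inf_{a ∈ ℝ^d} [φ ψ_1(ε − (1−φ)(a ⊗ n̂)ˢʸᵐ) + (1−φ) ψ_2(ε + φ (a ⊗ n̂)ˢʸᵐ)]. Then for each symmetric ε the infimum is attained at a unique a*(ε), the function ψ^{rel} is differentiable in ε, and its gradient equals the volume-averaged stress: Dψ^{rel}(ε) = φ σ_1 + (1−φ) σ_2, where σ_1 = C_1(ε_1 − ε_1^B), σ_2 = C_2(ε_2 − ε_2^B) with ε_1 = ε − (1−φ)(a*(ε) ⊗ n̂)ˢʸᵐ and ε_2 = ε + φ (a*(ε) ⊗ n̂)ˢʸᵐ. -/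

import Mathlib

open Matrix

attribute [local instance] Matrix.normedAddCommGroup Matrix.normedSpace

/-- The Frobenius inner product `⟨A, B⟩ = tr (A Bᵀ)`. -/
noncomputable def frob {d : ℕ} (A B : Matrix (Fin d) (Fin d) ℝ) : ℝ := (A * Bᵀ).trace

/-- The symmetric part `Aˢʸᵐ = (A + Aᵀ)/2`. -/
noncomputable def symPart {d : ℕ} (A : Matrix (Fin d) (Fin d) ℝ) :
    Matrix (Fin d) (Fin d) ℝ := (1 / 2 : ℝ) • (A + Aᵀ)

/-- A stiffness tensor: self-adjoint for the Frobenius inner product, `C A = C(Aˢʸᵐ)`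
symmetric for every `A`, and positive definite on nonzero symmetric matrices. -/
def IsStiffness {d : ℕ}
    (C : Matrix (Fin d) (Fin d) ℝ →ₗ[ℝ] Matrix (Fin d) (Fin d) ℝ) : Prop :=
  (∀ A B, frob (C A) B = frob A (C B)) ∧
  (∀ A, C A = C (symPart A)) ∧
  (∀ A, (C A)ᵀ = C A) ∧
  (∀ S : Matrix (Fin d) (Fin d) ℝ, Sᵀ = S → S ≠ 0 → 0 < frob S (C S))

/-- The dual-phase energy before relaxation:
`φ ψ₁(ε − (1−φ)(a ⊗ n̂)ˢʸᵐ) + (1−φ) ψ₂(ε + φ (a ⊗ n̂)ˢʸᵐ)` with Hooke energies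
`ψ_i(ε) = ½⟨ε − ε_i^B, C_i(ε − ε_i^B)⟩`. -/
noncomputable def dualE {d : ℕ}
    (C₁ C₂ : Matrix (Fin d) (Fin d) ℝ →ₗ[ℝ] Matrix (Fin d) (Fin d) ℝ)
    (ε₁B ε₂B : Matrix (Fin d) (Fin d) ℝ) (φ : ℝ) (nh : Fin d → ℝ)
    (ε : Matrix (Fin d) (Fin d) ℝ) (a : Fin d → ℝ) : ℝ :=
  φ * ((1 / 2) * frob (ε - (1 - φ) • symPart (vecMulVec a nh) - ε₁B)
        (C₁ (ε - (1 - φ) • symPart (vecMulVec a nh) - ε₁B)))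
    + (1 - φ) * ((1 / 2) * frob (ε + φ • symPart (vecMulVec a nh) - ε₂B)
        (C₂ (ε + φ • symPart (vecMulVec a nh) - ε₂B)))

/-- The partial rank-one relaxed dual-phase energy `ψ^{rel}(ε) = inf_a dualE(ε, a)`. -/
noncomputable def relaxedEnergy {d : ℕ}
    (C₁ C₂ : Matrix (Fin d) (Fin d) ℝ →ₗ[ℝ] Matrix (Fin d) (Fin d) ℝ)
    (ε₁B ε₂B : Matrix (Fin d) (Fin d) ℝ) (φ : ℝ) (nh : Fin d → ℝ)
    (ε : Matrix (Fin d) (Fin d) ℝ) : ℝ :=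
  ⨅ a : Fin d → ℝ, dualE C₁ C₂ ε₁B ε₂B φ nh ε a

lemma frob_eq_sum {d : ℕ} (A B : Matrix (Fin d) (Fin d) ℝ) :
    frob A B = ∑ i, ∑ j, A i j * B i j := by
  simp [frob, Matrix.trace, Matrix.mul_apply]

lemma frob_comm {d : ℕ} (A B : Matrix (Fin d) (Fin d) ℝ) : frob A B = frob B A := by
  simp [frob_eq_sum, mul_comm]

lemma frob_add_left {d : ℕ} (A B D : Matrix (Fin d) (Fin d) ℝ) :
    frob (A + B) D = frob A D + frob B D := by
  simp [frob, Matrix.add_mul]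

lemma frob_smul_left {d : ℕ} (c : ℝ) (A D : Matrix (Fin d) (Fin d) ℝ) :
    frob (c • A) D = c * frob A D := by
  simp [frob]

lemma frob_add_right {d : ℕ} (A B D : Matrix (Fin d) (Fin d) ℝ) :
    frob D (A + B) = frob D A + frob D B := by
  rw [frob_comm, frob_add_left, frob_comm A, frob_comm B]

lemma frob_smul_right {d : ℕ} (c : ℝ) (A D : Matrix (Fin d) (Fin d) ℝ) :
    frob D (c • A) = c * frob D A := by
  rw [frob_comm, frob_smul_left, frob_comm A]

/-- Frobenius product as a bilinear map. -/
noncomputable def frobL {d : ℕ} :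
    Matrix (Fin d) (Fin d) ℝ →ₗ[ℝ] Matrix (Fin d) (Fin d) ℝ →ₗ[ℝ] ℝ :=
  LinearMap.mk₂ ℝ frob (fun A B D => frob_add_left A B D) (fun c A D => frob_smul_left c A D)
    (fun D A B => frob_add_right A B D) (fun c D A => frob_smul_right c A D)

lemma frobL_apply {d : ℕ} (A B : Matrix (Fin d) (Fin d) ℝ) : frobL A B = frob A B := rfl

/-- The map `a ↦ (a ⊗ n)ˢʸᵐ`. -/
noncomputable def symL {d : ℕ} (nh : Fin d → ℝ) :
    (Fin d → ℝ) →ₗ[ℝ] Matrix (Fin d) (Fin d) ℝ where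
  toFun a := symPart (vecMulVec a nh)
  map_add' a b := by
    ext i j; simp [symPart, vecMulVec_apply]; ring
  map_smul' c a := by
    ext i j; simp [symPart, vecMulVec_apply]; ring

lemma symL_apply {d : ℕ} (nh a : Fin d → ℝ) : symL nh a = symPart (vecMulVec a nh) := rfl

lemma symPart_symm {d : ℕ} (A : Matrix (Fin d) (Fin d) ℝ) : (symPart A)ᵀ = symPart A := by
  simp [symPart, add_comm]

lemma symL_inj {d : ℕ} (nh : Fin d → ℝ) (hnh : nh ⬝ᵥ nh = 1) (a : Fin d → ℝ)
    (h : symL nh a = 0) : a = 0 := by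
  have h1 : ∀ i j, a i * nh j + a j * nh i = 0 := by
    intro i j
    have := congrFun (congrFun h i) j
    simp [symL_apply, symPart, vecMulVec_apply] at this
    linarith
  have h2 : ∀ i, a i + (a ⬝ᵥ nh) * nh i = 0 := by
    intro i
    have : ∑ j, (a i * nh j + a j * nh i) * nh j = 0 := by simp [h1]
    have e : ∑ j, (a i * nh j + a j * nh i) * nh j
        = a i * (nh ⬝ᵥ nh) + (a ⬝ᵥ nh) * nh i := by
      simp only [dotProduct, Finset.mul_sum, Finset.sum_mul, ← Finset.sum_add_distrib]
      exact Finset.sum_congr rfl fun j _ => by ring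
    rw [e, hnh] at this; linarith
  have h3 : a ⬝ᵥ nh = 0 := by
    have : ∑ i, (a i + (a ⬝ᵥ nh) * nh i) * nh i = 0 := by simp [h2]
    have e : ∑ i, (a i + (a ⬝ᵥ nh) * nh i) * nh i
        = a ⬝ᵥ nh + (a ⬝ᵥ nh) * (nh ⬝ᵥ nh) := by
      conv_rhs => rw [dotProduct_comm a nh]
      simp only [add_mul, Finset.sum_add_distrib, mul_assoc, ← Finset.mul_sum]
      rw [dotProduct_comm a nh]
      simp [dotProduct, mul_comm]
    rw [e, hnh] at this; linarith
  ext i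
  have := h2 i
  rw [h3] at this; simpa using this

lemma IsStiffness.nonneg {d : ℕ}
    {C : Matrix (Fin d) (Fin d) ℝ →ₗ[ℝ] Matrix (Fin d) (Fin d) ℝ} (hC : IsStiffness C)
    (A : Matrix (Fin d) (Fin d) ℝ) : 0 ≤ frob A (C A) := by
  obtain ⟨h1, h2, _, h4⟩ := hC
  have : frob A (C A) = frob (symPart A) (C (symPart A)) := by
    calc frob A (C A) = frob A (C (symPart A)) := by rw [← h2]
      _ = frob (C A) (symPart A) := (h1 _ _).symm
      _ = frob (C (symPart A)) (symPart A) := by rw [← h2]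
      _ = _ := h1 _ _
  rw [this]
  by_cases h : symPart A = 0
  · rw [h]; simp [frob]
  · exact (h4 _ (symPart_symm A) h).le

lemma quad_expand {d : ℕ}
    {C : Matrix (Fin d) (Fin d) ℝ →ₗ[ℝ] Matrix (Fin d) (Fin d) ℝ} (hC : IsStiffness C)
    (X U : Matrix (Fin d) (Fin d) ℝ) :
    frob (X + U) (C (X + U)) = frob X (C X) + 2 * frob (C X) U + frob U (C U) := by
  rw [map_add, frob_add_left, frob_add_right, frob_add_right, ← hC.1 X U, frob_comm U (C X)]
  ring

lemma linear_bound {E : Type*} [NormedAddCommGroup E] [NormedSpace ℝ E] [FiniteDimensional ℝ E]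
    (f : E →ₗ[ℝ] E) : ∃ K : ℝ, ∀ x, ‖f x‖ ≤ K * ‖x‖ :=
  ⟨‖LinearMap.toContinuousLinearMap f‖, fun x => (LinearMap.toContinuousLinearMap f).le_opNorm x⟩

lemma quad_bound {d : ℕ}
    (C : Matrix (Fin d) (Fin d) ℝ →ₗ[ℝ] Matrix (Fin d) (Fin d) ℝ) :
    ∃ K : ℝ, ∀ H : Matrix (Fin d) (Fin d) ℝ, frob H (C H) ≤ K * ‖H‖ ^ 2 := by
  obtain ⟨K, hK⟩ : ∃ K : ℝ, ∀ H : Matrix (Fin d) (Fin d) ℝ, ‖C H‖ ≤ K * ‖H‖ :=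
    linear_bound (E := Matrix (Fin d) (Fin d) ℝ) C
  refine ⟨∑ _i : Fin d, ∑ _j : Fin d, K, fun H => ?_⟩
  rw [frob_eq_sum, Finset.sum_mul]
  refine Finset.sum_le_sum fun i _ => ?_
  rw [Finset.sum_mul]
  refine Finset.sum_le_sum fun j _ => ?_
  have h1 : ‖H i j‖ ≤ ‖H‖ := Matrix.norm_entry_le_entrywise_sup_norm H
  have h2 : ‖(C H) i j‖ ≤ ‖C H‖ := Matrix.norm_entry_le_entrywise_sup_norm (C H)
  have h3 := hK H
  calc H i j * (C H) i j ≤ ‖H i j * (C H) i j‖ := Real.le_norm_self _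
    _ = ‖H i j‖ * ‖(C H) i j‖ := norm_mul _ _
    _ ≤ ‖H‖ * (K * ‖H‖) := by
        gcongr; exact h2.trans h3
    _ = _ := by ring

/-- Existence of a stationary jump vector. -/
lemma exists_stationary {d : ℕ}
    {C₁ C₂ : Matrix (Fin d) (Fin d) ℝ →ₗ[ℝ] Matrix (Fin d) (Fin d) ℝ}
    (hC₁ : IsStiffness C₁) (hC₂ : IsStiffness C₂)
    (ε₁B ε₂B : Matrix (Fin d) (Fin d) ℝ)
    (φ : ℝ) (hφ : φ ∈ Set.Ioo (0 : ℝ) 1)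
    (nh : Fin d → ℝ) (hnh : nh ⬝ᵥ nh = 1) (ε : Matrix (Fin d) (Fin d) ℝ) :
    ∃ a : Fin d → ℝ, ∀ b : Fin d → ℝ,
      frob (C₁ (ε - (1 - φ) • symL nh a - ε₁B)) (symL nh b)
        = frob (C₂ (ε + φ • symL nh a - ε₂B)) (symL nh b) := by
  obtain ⟨h0, h1⟩ := hφ
  let M : (Fin d → ℝ) →ₗ[ℝ] Module.Dual ℝ (Fin d → ℝ) :=
    (frobL.compl₂ (symL nh)) ∘ₗ (((1 - φ) • C₁ + φ • C₂) ∘ₗ symL nh)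
  have hM : ∀ a b, M a b = (1 - φ) * frob (C₁ (symL nh a)) (symL nh b)
      + φ * frob (C₂ (symL nh a)) (symL nh b) := by
    intro a b
    simp [M, frobL_apply, frob_add_left, frob_smul_left]
  have hinj : Function.Injective M := by
    rw [injective_iff_map_eq_zero]
    intro a ha
    by_contra hne
    have hL : symL nh a ≠ 0 := fun h => hne (symL_inj nh hnh a h)
    have e := hM a a
    rw [ha] at e
    have p1 := hC₁.2.2.2 (symL nh a) (symPart_symm _) hL
    have p2 := hC₂.2.2.2 (symL nh a) (symPart_symm _) hL
    rw [frob_comm] at p1 p2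
    have := mul_pos (sub_pos.2 h1) p1
    have := mul_pos h0 p2
    simp at e
    linarith
  have hsurj : Function.Surjective M :=
    (LinearMap.injective_iff_surjective_of_finrank_eq_finrank
      (Subspace.dual_finrank_eq).symm).1 hinj
  obtain ⟨a, ha⟩ := hsurj ((frobL (C₁ (ε - ε₁B) - C₂ (ε - ε₂B))) ∘ₗ symL nh)
  refine ⟨a, fun b => ?_⟩
  have e := hM a b
  rw [ha] at e
  have e1 : ε - (1 - φ) • symL nh a - ε₁B = (ε - ε₁B) + (-(1 - φ)) • symL nh a := by module
  have e2 : ε + φ • symL nh a - ε₂B = (ε - ε₂B) + φ • symL nh a := by module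
  have e3 : C₁ (ε - ε₁B) - C₂ (ε - ε₂B) = C₁ (ε - ε₁B) + (-1 : ℝ) • C₂ (ε - ε₂B) := by module
  rw [e3] at e
  simp only [LinearMap.comp_apply, frobL_apply, frob_add_left, frob_smul_left] at e
  rw [e1, e2, map_add, map_add, map_smul, map_smul, frob_add_left, frob_add_left,
    frob_smul_left, frob_smul_left]
  linarith

lemma dualE_expand {d : ℕ}
    {C₁ C₂ : Matrix (Fin d) (Fin d) ℝ →ₗ[ℝ] Matrix (Fin d) (Fin d) ℝ}
    (hC₁ : IsStiffness C₁) (hC₂ : IsStiffness C₂)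
    (ε₁B ε₂B : Matrix (Fin d) (Fin d) ℝ) (φ : ℝ)
    (nh : Fin d → ℝ) (ε : Matrix (Fin d) (Fin d) ℝ) (a : Fin d → ℝ)
    (ha : ∀ b : Fin d → ℝ,
      frob (C₁ (ε - (1 - φ) • symL nh a - ε₁B)) (symL nh b)
        = frob (C₂ (ε + φ • symL nh a - ε₂B)) (symL nh b))
    (H : Matrix (Fin d) (Fin d) ℝ) (b : Fin d → ℝ) :
    dualE C₁ C₂ ε₁B ε₂B φ nh (ε + H) (a + b) = dualE C₁ C₂ ε₁B ε₂B φ nh ε a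
      + frob (φ • C₁ (ε - (1 - φ) • symPart (vecMulVec a nh) - ε₁B)
                + (1 - φ) • C₂ (ε + φ • symPart (vecMulVec a nh) - ε₂B)) H
      + (φ * (1 / 2 * frob (H + (-(1 - φ)) • symL nh b) (C₁ (H + (-(1 - φ)) • symL nh b)))
        + (1 - φ) * (1 / 2 * frob (H + φ • symL nh b) (C₂ (H + φ • symL nh b)))) := by
  unfold dualE
  simp only [← symL_apply]
  have e1 : ε + H - (1 - φ) • symL nh (a + b) - ε₁B
      = (ε - (1 - φ) • symL nh a - ε₁B) + (H + (-(1 - φ)) • symL nh b) := by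
    rw [map_add]; module
  have e2 : ε + H + φ • symL nh (a + b) - ε₂B
      = (ε + φ • symL nh a - ε₂B) + (H + φ • symL nh b) := by
    rw [map_add]; module
  rw [e1, e2, quad_expand hC₁, quad_expand hC₂]
  have hb := ha b
  generalize ε - (1 - φ) • symL nh a - ε₁B = X at *
  generalize ε + φ • symL nh a - ε₂B = Y at *
  have r1 : frob (C₁ X) (H + (-(1 - φ)) • symL nh b)
      = frob (C₁ X) H - (1 - φ) * frob (C₁ X) (symL nh b) := by
    rw [frob_add_right, frob_smul_right]; ring
  have r2 : frob (C₂ Y) (H + φ • symL nh b)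
      = frob (C₂ Y) H + φ * frob (C₂ Y) (symL nh b) := by
    rw [frob_add_right, frob_smul_right]
  have r3 : frob (φ • C₁ X + (1 - φ) • C₂ Y) H
      = φ * frob (C₁ X) H + (1 - φ) * frob (C₂ Y) H := by
    rw [frob_add_left, frob_smul_left, frob_smul_left]
  rw [r1, r2, r3, hb]
  ring

/-- effective stress of the relaxed dual-phase energy is the volume average
of the phase stresses: for each symmetric `ε` the infimum is attained at a unique
`a*(ε)`, `ψ^{rel}` is differentiable, and `Dψ^{rel}(ε) = φ σ₁ + (1−φ) σ₂` with
`σ₁ = C₁(ε₁ − ε₁^B)`, `σ₂ = C₂(ε₂ − ε₂^B)`, `ε₁ = ε − (1−φ)(a* ⊗ n̂)ˢʸᵐ`,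
`ε₂ = ε + φ (a* ⊗ n̂)ˢʸᵐ`. -/
theorem relaxed_energy_gradient_is_average_stress {d : ℕ}
    (C₁ C₂ : Matrix (Fin d) (Fin d) ℝ →ₗ[ℝ] Matrix (Fin d) (Fin d) ℝ)
    (hC₁ : IsStiffness C₁) (hC₂ : IsStiffness C₂)
    (ε₁B ε₂B : Matrix (Fin d) (Fin d) ℝ) (hε₁B : ε₁Bᵀ = ε₁B) (hε₂B : ε₂Bᵀ = ε₂B)
    (φ : ℝ) (hφ : φ ∈ Set.Ioo (0 : ℝ) 1)
    (nh : Fin d → ℝ) (hnh : nh ⬝ᵥ nh = 1) :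
    ∀ ε : Matrix (Fin d) (Fin d) ℝ, εᵀ = ε →
      ∃ astar : Fin d → ℝ,
        (dualE C₁ C₂ ε₁B ε₂B φ nh ε astar = relaxedEnergy C₁ C₂ ε₁B ε₂B φ nh ε
          ∧ (∀ b, dualE C₁ C₂ ε₁B ε₂B φ nh ε astar ≤ dualE C₁ C₂ ε₁B ε₂B φ nh ε b)
          ∧ (∀ a, (∀ b, dualE C₁ C₂ ε₁B ε₂B φ nh ε a ≤ dualE C₁ C₂ ε₁B ε₂B φ nh ε b)
              → a = astar))
        ∧ DifferentiableAt ℝ (relaxedEnergy C₁ C₂ ε₁B ε₂B φ nh) ε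
        ∧ ∀ H, fderiv ℝ (relaxedEnergy C₁ C₂ ε₁B ε₂B φ nh) ε H
            = frob (φ • C₁ (ε - (1 - φ) • symPart (vecMulVec astar nh) - ε₁B)
                + (1 - φ) • C₂ (ε + φ • symPart (vecMulVec astar nh) - ε₂B)) H := by
  intro ε _
  obtain ⟨a, ha⟩ := exists_stationary hC₁ hC₂ ε₁B ε₂B φ hφ nh hnh ε
  have hexp := dualE_expand hC₁ hC₂ ε₁B ε₂B φ nh ε a ha
  obtain ⟨h0, h1⟩ := hφ
  have h1' : 0 < 1 - φ := sub_pos.2 h1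
  set σ := φ • C₁ (ε - (1 - φ) • symPart (vecMulVec a nh) - ε₁B)
                + (1 - φ) • C₂ (ε + φ • symPart (vecMulVec a nh) - ε₂B) with hσ
  have hlow : ∀ H b, dualE C₁ C₂ ε₁B ε₂B φ nh ε a + frob σ H
      ≤ dualE C₁ C₂ ε₁B ε₂B φ nh (ε + H) b := by
    intro H b
    have e := hexp H (b - a)
    rw [add_sub_cancel] at e
    rw [e]
    have p1 := hC₁.nonneg (H + (-(1 - φ)) • symL nh (b - a))
    have p2 := hC₂.nonneg (H + φ • symL nh (b - a))
    have : 0 ≤ φ * (1 / 2 * frob (H + (-(1 - φ)) • symL nh (b - a))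
        (C₁ (H + (-(1 - φ)) • symL nh (b - a))))
        + (1 - φ) * (1 / 2 * frob (H + φ • symL nh (b - a)) (C₂ (H + φ • symL nh (b - a)))) := by
      positivity
    linarith
  have hmin : ∀ b, dualE C₁ C₂ ε₁B ε₂B φ nh ε a ≤ dualE C₁ C₂ ε₁B ε₂B φ nh ε b := by
    intro b
    have := hlow 0 b
    simpa [frob] using this
  have hrel : relaxedEnergy C₁ C₂ ε₁B ε₂B φ nh ε = dualE C₁ C₂ ε₁B ε₂B φ nh ε a :=
    le_antisymm (ciInf_le ⟨_, by rintro _ ⟨b, rfl⟩; exact hmin b⟩ a) (le_ciInf hmin)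
  obtain ⟨K₁, hK₁⟩ := quad_bound C₁
  obtain ⟨K₂, hK₂⟩ := quad_bound C₂
  have hderiv : HasFDerivAt (relaxedEnergy C₁ C₂ ε₁B ε₂B φ nh)
      (LinearMap.toContinuousLinearMap (frobL σ)) ε := by
    refine hasFDerivAt_iff_isLittleO_nhds_zero.2 ?_
    have hO : (fun H => relaxedEnergy C₁ C₂ ε₁B ε₂B φ nh (ε + H)
        - relaxedEnergy C₁ C₂ ε₁B ε₂B φ nh ε - LinearMap.toContinuousLinearMap (frobL σ) H)
        =O[nhds 0] fun H : Matrix (Fin d) (Fin d) ℝ => ‖H‖ ^ 2 := by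
      refine Asymptotics.IsBigO.of_bound (φ * (1 / 2 * K₁) + (1 - φ) * (1 / 2 * K₂))
        (Filter.Eventually.of_forall fun H => ?_)
      have l1 : dualE C₁ C₂ ε₁B ε₂B φ nh ε a + frob σ H
          ≤ relaxedEnergy C₁ C₂ ε₁B ε₂B φ nh (ε + H) := le_ciInf (hlow H)
      have l2 : relaxedEnergy C₁ C₂ ε₁B ε₂B φ nh (ε + H)
          ≤ dualE C₁ C₂ ε₁B ε₂B φ nh (ε + H) a :=
        ciInf_le ⟨_, by rintro _ ⟨b, rfl⟩; exact hlow H b⟩ a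
      have e := hexp H 0
      simp only [add_zero, map_zero, smul_zero] at e
      have k1 := mul_le_mul_of_nonneg_left (hK₁ H) h0.le
      have k2 := mul_le_mul_of_nonneg_left (hK₂ H) h1'.le
      rw [LinearMap.coe_toContinuousLinearMap', frobL_apply, hrel, Real.norm_of_nonneg (by linarith),
        Real.norm_of_nonneg (by positivity)]
      linarith
    refine hO.trans_isLittleO ?_
    exact Asymptotics.isLittleO_norm_pow_id one_lt_two
  refine ⟨a, ⟨hrel.symm, hmin, ?_⟩, hderiv.differentiableAt, fun H => ?_⟩
  · intro a' ha'
    have e := hexp 0 (a' - a)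
    have z : frob σ 0 = 0 := by simp [frob]
    rw [add_sub_cancel, add_zero, z] at e
    have hle := ha' a
    by_contra hne
    have hL : symL nh (a' - a) ≠ 0 := fun h => hne (sub_eq_zero.1 (symL_inj nh hnh _ h))
    have p1 := hC₁.2.2.2 (symL nh (a' - a)) (symPart_symm _) hL
    have p2 := hC₂.2.2.2 (symL nh (a' - a)) (symPart_symm _) hL
    simp only [zero_add, map_smul, frob_smul_left, frob_smul_right] at e
    have q1 : 0 < φ * (1 / 2 * (-(1 - φ) * (-(1 - φ) *
        frob (symL nh (a' - a)) (C₁ (symL nh (a' - a)))))) := by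
      have : 0 < φ * (1 / 2 * ((1 - φ) * ((1 - φ) *
        frob (symL nh (a' - a)) (C₁ (symL nh (a' - a)))))) := by positivity
      linarith
    have q2 : 0 < (1 - φ) * (1 / 2 * (φ * (φ *
        frob (symL nh (a' - a)) (C₂ (symL nh (a' - a)))))) := by positivity
    linarith
  · rw [hderiv.fderiv]; rfl
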